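/- Consider the inverted pendulum mass matrix on ℝ³: g₁₁ = 1, g₁₂ = −a cos(x¹), g₁₃ = −a sin(x¹), g₂₂ = g₃₃ = 1, g₂₃ = 0, with 0 < a < 1. Let U ⊆ {x ∈ ℝ³ : sin(x¹) ≠ 0} be open. A smooth map λ = (λ¹,λ²,λ³) : U → ℝ³ satisfies the λ-equations ∂(g_{1i}λ^i)/∂x^k − 2[k1,i]λ^i = 0 (k = 1,2,3) if and only if the function ν := λ¹ − a cos(x¹)λ² − a sin(x¹)λ³ satisfies ∂ν/∂x² = ∂ν/∂x³ = 0 and the identities λ¹ = ν + (1/2)cot(x¹) ∂ν/∂x¹ + a λ³/sin(x¹) and λ² = (∂ν/∂x¹)/(2a sin(x¹)) + cot(x¹) λ³ hold on U. In particular, λ³ may be an arbitrary smooth function and, when U has connected slices in the x¹-direction, ν is an arbitrary smooth function of x¹ alone. -/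

import Mathlib

/-- Partial derivative in the `k`-th coordinate direction. -/
noncomputable def pd {n : ℕ} (k : Fin n) (f : (Fin n → ℝ) → ℝ) (x : Fin n → ℝ) : ℝ :=
  fderiv ℝ f x (Pi.single k 1)

/-- Christoffel symbol of the first kind `[ij,k]` of the matrix-valued map `g`. -/
noncomputable def chr {n : ℕ} (g : (Fin n → ℝ) → Matrix (Fin n) (Fin n) ℝ)
    (i j k : Fin n) (x : Fin n → ℝ) : ℝ :=
  (1/2) * (pd i (fun y => g y j k) x + pd j (fun y => g y i k) x - pd k (fun y => g y i j) x)

/-- Mass matrix of the inverted pendulum in a vertical plane. -/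
noncomputable def gPend (a : ℝ) (x : Fin 3 → ℝ) : Matrix (Fin 3) (Fin 3) ℝ :=
  !![1, -a * Real.cos (x 0), -a * Real.sin (x 0);
     -a * Real.cos (x 0), 1, 0;
     -a * Real.sin (x 0), 0, 1]

lemma pd_const' {n : ℕ} (k : Fin n) (c : ℝ) (x : Fin n → ℝ) : pd k (fun _ => c) x = 0 := by
  simp [pd]

lemma pd_cos (a : ℝ) (k : Fin 3) (x : Fin 3 → ℝ) :
    pd k (fun y => -(a * Real.cos (y 0))) x =
      a * Real.sin (x 0) * (Pi.single k 1 : Fin 3 → ℝ) 0 := by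
  have h0 : HasFDerivAt (fun y : Fin 3 → ℝ => y 0)
      (ContinuousLinearMap.proj (R := ℝ) (φ := fun _ : Fin 3 => ℝ) 0) x :=
    (ContinuousLinearMap.proj (R := ℝ) (φ := fun _ : Fin 3 => ℝ) 0).hasFDerivAt
  have h := (h0.cos.const_mul a).neg
  have e : fderiv ℝ (fun y : Fin 3 → ℝ => -(a * Real.cos (y 0))) x = _ := h.fderiv
  rw [pd, e]
  simp
  ring

lemma pd_sin (a : ℝ) (k : Fin 3) (x : Fin 3 → ℝ) :
    pd k (fun y => -(a * Real.sin (y 0))) x =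
      -(a * Real.cos (x 0) * (Pi.single k 1 : Fin 3 → ℝ) 0) := by
  have h0 : HasFDerivAt (fun y : Fin 3 → ℝ => y 0)
      (ContinuousLinearMap.proj (R := ℝ) (φ := fun _ : Fin 3 => ℝ) 0) x :=
    (ContinuousLinearMap.proj (R := ℝ) (φ := fun _ : Fin 3 => ℝ) 0).hasFDerivAt
  have h := (h0.sin.const_mul a).neg
  have e : fderiv ℝ (fun y : Fin 3 → ℝ => -(a * Real.sin (y 0))) x = _ := h.fderiv
  rw [pd, e]
  simp
  ring

/-- Characterization of all solutions to the λ-equations for the inverted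
pendulum in a vertical plane, on a region where `sin x¹ ≠ 0`. -/
theorem pendulum_lambda_characterization (a : ℝ) (ha : 0 < a) (ha1 : a < 1)
    (U : Set (Fin 3 → ℝ)) (hUopen : IsOpen U)
    (hU : U ⊆ {x : Fin 3 → ℝ | Real.sin (x 0) ≠ 0})
    (lam : (Fin 3 → ℝ) → Fin 3 → ℝ)
    (hlam : ∀ i, ContDiffOn ℝ (⊤ : ℕ∞) (fun x => lam x i) U) :
    -- λ satisfies the λ-equations on U …
    (∀ x ∈ U, ∀ k : Fin 3,
        pd k (fun y => ∑ i, gPend a y 0 i * lam y i) x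
          - 2 * ∑ i, chr (gPend a) k 0 i x * lam x i = 0)
    ↔
    -- … iff ν = λ¹ − a cos x¹ λ² − a sin x¹ λ³ depends on x¹ only and the
    -- identities for λ¹ and λ² hold
    (∀ x ∈ U,
        pd 1 (fun y => lam y 0 - a * Real.cos (y 0) * lam y 1
            - a * Real.sin (y 0) * lam y 2) x = 0 ∧
        pd 2 (fun y => lam y 0 - a * Real.cos (y 0) * lam y 1
            - a * Real.sin (y 0) * lam y 2) x = 0 ∧
        lam x 0 = (lam x 0 - a * Real.cos (x 0) * lam x 1 - a * Real.sin (x 0) * lam x 2)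
            + (1/2) * (Real.cos (x 0) / Real.sin (x 0)) *
              pd 0 (fun y => lam y 0 - a * Real.cos (y 0) * lam y 1
                - a * Real.sin (y 0) * lam y 2) x
            + a * lam x 2 / Real.sin (x 0) ∧
        lam x 1 = pd 0 (fun y => lam y 0 - a * Real.cos (y 0) * lam y 1
              - a * Real.sin (y 0) * lam y 2) x / (2 * a * Real.sin (x 0))
            + (Real.cos (x 0) / Real.sin (x 0)) * lam x 2) := by
  have hnu : (fun y => ∑ i, gPend a y 0 i * lam y i) =
      fun y => lam y 0 - a * Real.cos (y 0) * lam y 1 - a * Real.sin (y 0) * lam y 2 := by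
    funext y
    simp [Fin.sum_univ_three, gPend]
    ring
  rw [hnu]
  refine forall₂_congr fun x hx => ?_
  have hs : Real.sin (x 0) ≠ 0 := hU hx
  have hsc := Real.sin_sq_add_cos_sq (x 0)
  have ha0 : a ≠ 0 := ha.ne'
  generalize (fun y : Fin 3 → ℝ => lam y 0 - a * Real.cos (y 0) * lam y 1
    - a * Real.sin (y 0) * lam y 2) = nu
  have key0 : 2 * ∑ i, chr (gPend a) 0 0 i x * lam x i =
      2 * (a * Real.sin (x 0) * lam x 1 - a * Real.cos (x 0) * lam x 2) := by
    simp [Fin.sum_univ_three, chr, gPend, pd_const', pd_cos, pd_sin]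
    ring
  have key1 : 2 * ∑ i, chr (gPend a) 1 0 i x * lam x i = 0 := by
    simp [Fin.sum_univ_three, chr, gPend, pd_const', pd_cos, pd_sin]
  have key2 : 2 * ∑ i, chr (gPend a) 2 0 i x * lam x i = 0 := by
    simp [Fin.sum_univ_three, chr, gPend, pd_const', pd_cos, pd_sin]
  simp only [Fin.forall_fin_succ, IsEmpty.forall_iff, and_true]
  change pd 0 nu x - 2 * ∑ i, chr (gPend a) 0 0 i x * lam x i = 0 ∧
    pd 1 nu x - 2 * ∑ i, chr (gPend a) 1 0 i x * lam x i = 0 ∧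
    pd 2 nu x - 2 * ∑ i, chr (gPend a) 2 0 i x * lam x i = 0 ↔ _
  rw [key0, key1, key2, sub_zero, sub_zero]
  generalize pd 0 nu x = d
  constructor
  · rintro ⟨h0, h1, h2⟩
    have hd : d = 2 * (a * Real.sin (x 0) * lam x 1 - a * Real.cos (x 0) * lam x 2) := by
      linarith
    refine ⟨h1, h2, ?_, ?_⟩
    · rw [hd]
      field_simp
      linear_combination (a * lam x 2) * hsc
    · rw [hd]
      field_simp
      ring
  · rintro ⟨h1, h2, -, h4⟩
    refine ⟨?_, h1, h2⟩
    rw [h4]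
    field_simp
    ring
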